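/- Let 0 < α ≤ 1, let h > 0, let N ≥ 2 be an integer, let x_j = a + jh (j = 0,…,N), and let p, q, r be real-valued mesh functions with p(x_i) > 0 and r(x_i) > 0 for all i. Let λ_1 be the smallest eigenvalue of the discrete fractional Sturm–Liouville problem ₖΔ^α_N(p(x_k)·₀Δ^α_k y(x_k)) + q(x_k) y(x_k) = λ r(x_k) y(x_k), k = 1,…,N−1, y(x_0) = y(x_N) = 0, and let y^1 be a corresponding eigenfunction normalized so that I[y^1] = Σ_{k=1}^{N} r(x_k)(y^1(x_k))² = 1. Then y^1 minimizes the functional J[y] = Σ_{k=1}^{N}[p(x_k)(₀Δ^α_k y(x_k))² + q(x_k)(y(x_k))²] over all mesh functions y satisfying y(x_0) = y(x_N) = 0 and I[y] = 1, and moreover J[y^1] = λ_1. -/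

import Mathlib

/-!
The equation `ₖΔ^α_N (p ₀Δ^α_k y) + q y = λ r y` is the Euler–Lagrange equation of `J` under the
constraint `I = 1`. Summation by parts (`sum_mul_glBackDiff`) moves the backward difference onto the
forward one, so the symmetric bilinear form `slB` of `J` satisfies
`slB y z = Σ z_k (L y)_k` when `z_0 = 0`, where `L` is the Sturm–Liouville operator. Testing the
eigenvalue equation of `y¹` against `y¹` itself gives `J[y¹] = λ₁ I[y¹] = λ₁`.

For minimality, `J` attains its minimum `μ` on the compact set of admissible mesh functions
(`exists_minimizer`). By homogeneity `J - μ I` is then a nonnegative quadratic form on the functions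
with zero boundary values, and it vanishes at the minimizer `z`; hence its bilinear form vanishes
against `z`, and testing with unit mesh functions shows that `z` is an eigenfunction for `μ`
(`minimizer_isSLEigenpair`). Since `λ₁` is the smallest eigenvalue, `λ₁ ≤ μ`.
-/

/-- The Grünwald–Letnikov coefficients `a_i^{(α)} = (-1)^i α(α-1)⋯(α-i+1)/i!`
(with `a_0^{(α)} = 1`). -/
noncomputable def acoef (α : ℝ) (i : ℕ) : ℝ :=
  (-1 : ℝ) ^ i * (∏ j ∈ Finset.range i, (α - (j : ℝ))) / (Nat.factorial i)

/-- The backward fractional difference of order `α` on a uniform mesh with step `h`,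
of a mesh function `f` (where `f k` stands for `f(x_k)`, `x_k = a + k h`):
`₀Δ^α_k f(x_k) = h^{-α} Σ_{i=0}^{k} a_i^{(α)} f(x_{k-i})`. -/
noncomputable def glBackDiff (α h : ℝ) (f : ℕ → ℝ) (k : ℕ) : ℝ :=
  h ^ (-α) * ∑ i ∈ Finset.range (k + 1), acoef α i * f (k - i)

/-- The forward fractional difference of order `α` on a uniform mesh with step `h`
and `N + 1` mesh points: `ₖΔ^α_N f(x_k) = h^{-α} Σ_{i=0}^{N-k} a_i^{(α)} f(x_{k+i})`. -/
noncomputable def glFwdDiff (α h : ℝ) (N : ℕ) (f : ℕ → ℝ) (k : ℕ) : ℝ :=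
  h ^ (-α) * ∑ i ∈ Finset.range (N - k + 1), acoef α i * f (k + i)

/-- `y` satisfies the discrete fractional Sturm–Liouville equation
`ₖΔ^α_N (p(x_k) ₀Δ^α_k y(x_k)) + q(x_k) y(x_k) = λ r(x_k) y(x_k)` for `k = 1, …, N-1`. -/
def SLSolves (α h : ℝ) (N : ℕ) (p q r : ℕ → ℝ) (lam : ℝ) (y : ℕ → ℝ) : Prop :=
  ∀ k, 1 ≤ k → k ≤ N - 1 →
    glFwdDiff α h N (fun j => p j * glBackDiff α h y j) k + q k * y k = lam * (r k * y k)

/-- `(lam, y)` is an eigenpair of the discrete fractional Sturm–Liouville problem: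
`y` is a nontrivial mesh function satisfying the equation together with the
boundary conditions `y(x_0) = y(x_N) = 0`. -/
def IsSLEigenpair (α h : ℝ) (N : ℕ) (p q r : ℕ → ℝ) (lam : ℝ) (y : ℕ → ℝ) : Prop :=
  y 0 = 0 ∧ y N = 0 ∧ (∃ k ≤ N, y k ≠ 0) ∧ SLSolves α h N p q r lam y

/-- The functional `J[y] = Σ_{k=1}^{N} [p(x_k) (₀Δ^α_k y(x_k))² + q(x_k) y(x_k)²]`. -/
noncomputable def slJ (α h : ℝ) (N : ℕ) (p q : ℕ → ℝ) (y : ℕ → ℝ) : ℝ :=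
  ∑ k ∈ Finset.Icc 1 N, (p k * (glBackDiff α h y k) ^ 2 + q k * (y k) ^ 2)

/-- The functional `I[y] = Σ_{k=1}^{N} r(x_k) y(x_k)²`. -/
noncomputable def slI (N : ℕ) (r : ℕ → ℝ) (y : ℕ → ℝ) : ℝ :=
  ∑ k ∈ Finset.Icc 1 N, r k * (y k) ^ 2

/-- The symmetric bilinear form whose quadratic form is `slJ`. -/
noncomputable def slB (α h : ℝ) (N : ℕ) (p q : ℕ → ℝ) (y z : ℕ → ℝ) : ℝ :=
  ∑ k ∈ Finset.Icc 1 N, (p k * glBackDiff α h y k * glBackDiff α h z k + q k * y k * z k)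

lemma glBackDiff_eq_sum_Icc (α h : ℝ) (f : ℕ → ℝ) (hf : f 0 = 0) (k : ℕ) :
    glBackDiff α h f k = ∑ j ∈ Finset.Icc 1 k, h ^ (-α) * (acoef α (k - j) * f j) := by
  unfold glBackDiff
  rw [← Finset.sum_range_reflect, Finset.mul_sum]
  symm
  apply Finset.sum_subset_zero_on_sdiff
  · intro j hj
    simp only [Finset.mem_Icc, Finset.mem_range] at *
    omega
  · intro j hj
    simp only [Finset.mem_sdiff, Finset.mem_Icc, Finset.mem_range] at hj
    have : j = 0 := by omega
    subst this
    simp [hf]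
  · intro j hj
    simp only [Finset.mem_Icc] at hj
    rw [show k + 1 - 1 - j = k - j by omega, show k - (k - j) = j by omega]

lemma glFwdDiff_eq_sum_Icc (α h : ℝ) (N : ℕ) (g : ℕ → ℝ) (j : ℕ) (hj : j ≤ N) :
    glFwdDiff α h N g j = ∑ k ∈ Finset.Icc j N, h ^ (-α) * (acoef α (k - j) * g k) := by
  unfold glFwdDiff
  rw [Finset.mul_sum, ← Finset.Ico_add_one_right_eq_Icc, Finset.sum_Ico_eq_sum_range,
    show N + 1 - j = N - j + 1 by omega]
  simp

/-- Summation by parts: the forward difference is the adjoint of the backward difference on mesh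
functions vanishing at `x_0`. -/
lemma sum_mul_glBackDiff (α h : ℝ) (N : ℕ) (g z : ℕ → ℝ) (hz : z 0 = 0) :
    ∑ k ∈ Finset.Icc 1 N, g k * glBackDiff α h z k
      = ∑ k ∈ Finset.Icc 1 N, z k * glFwdDiff α h N g k := by
  have h1 : ∑ k ∈ Finset.Icc 1 N, g k * glBackDiff α h z k
      = ∑ k ∈ Finset.Icc 1 N, ∑ j ∈ Finset.Icc 1 k,
        g k * (h ^ (-α) * (acoef α (k - j) * z j)) := by
    refine Finset.sum_congr rfl fun k _ => ?_
    rw [glBackDiff_eq_sum_Icc α h z hz, Finset.mul_sum]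
  have h2 : ∑ j ∈ Finset.Icc 1 N, z j * glFwdDiff α h N g j
      = ∑ j ∈ Finset.Icc 1 N, ∑ k ∈ Finset.Icc j N,
        g k * (h ^ (-α) * (acoef α (k - j) * z j)) := by
    refine Finset.sum_congr rfl fun j hj => ?_
    rw [glFwdDiff_eq_sum_Icc α h N g j (Finset.mem_Icc.1 hj).2, Finset.mul_sum]
    exact Finset.sum_congr rfl fun k _ => by ring
  rw [h1, h2]
  apply Finset.sum_comm'
  intro k j
  simp only [Finset.mem_Icc]
  omega

lemma slB_eq_sum (α h : ℝ) (N : ℕ) (p q : ℕ → ℝ) (y z : ℕ → ℝ) (hz : z 0 = 0) :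
    slB α h N p q y z = ∑ k ∈ Finset.Icc 1 N,
      z k * (glFwdDiff α h N (fun j => p j * glBackDiff α h y j) k + q k * y k) := by
  unfold slB
  rw [Finset.sum_add_distrib,
    sum_mul_glBackDiff α h N (fun j => p j * glBackDiff α h y j) z hz, ← Finset.sum_add_distrib]
  exact Finset.sum_congr rfl fun k _ => by ring

/-- An eigenfunction satisfies `J[y] = λ I[y]`. -/
lemma slJ_eq_of_isSLEigenpair {α h : ℝ} {N : ℕ} {p q r : ℕ → ℝ} {lam : ℝ} {y : ℕ → ℝ}
    (hy : IsSLEigenpair α h N p q r lam y) :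
    slJ α h N p q y = lam * slI N r y := by
  obtain ⟨h0, hN, -, hs⟩ := hy
  have hJ : slJ α h N p q y = slB α h N p q y y :=
    Finset.sum_congr rfl fun k _ => by ring
  rw [hJ, slB_eq_sum α h N p q y y h0, slI, Finset.mul_sum]
  refine Finset.sum_congr rfl fun k hk => ?_
  rw [Finset.mem_Icc] at hk
  rcases hk.2.eq_or_lt with rfl | hlt
  · simp [hN]
  · rw [hs k hk.1 (by omega)]
    ring

lemma glBackDiff_congr (α h : ℝ) {y z : ℕ → ℝ} {k : ℕ} (hyz : ∀ j ≤ k, y j = z j) :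
    glBackDiff α h y k = glBackDiff α h z k := by
  unfold glBackDiff
  congr 1
  exact Finset.sum_congr rfl fun i _ => by rw [hyz _ (Nat.sub_le k i)]

lemma slJ_congr (α h : ℝ) {N : ℕ} (p q : ℕ → ℝ) {y z : ℕ → ℝ} (hyz : ∀ j ≤ N, y j = z j) :
    slJ α h N p q y = slJ α h N p q z := by
  refine Finset.sum_congr rfl fun k hk => ?_
  rw [Finset.mem_Icc] at hk
  rw [glBackDiff_congr α h (fun j hj => hyz j (hj.trans hk.2)), hyz k hk.2]

lemma slI_congr {N : ℕ} (r : ℕ → ℝ) {y z : ℕ → ℝ} (hyz : ∀ j ≤ N, y j = z j) :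
    slI N r y = slI N r z :=
  Finset.sum_congr rfl fun k hk => by rw [hyz k (Finset.mem_Icc.1 hk).2]

lemma glBackDiff_add_mul (α h : ℝ) (y z : ℕ → ℝ) (t : ℝ) (k : ℕ) :
    glBackDiff α h (fun j => y j + t * z j) k = glBackDiff α h y k + t * glBackDiff α h z k := by
  simp only [glBackDiff, Finset.mul_sum, ← Finset.sum_add_distrib]
  exact Finset.sum_congr rfl fun i _ => by ring

lemma slJ_add_mul (α h : ℝ) (N : ℕ) (p q y z : ℕ → ℝ) (t : ℝ) :
    slJ α h N p q (fun j => y j + t * z j)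
      = slJ α h N p q y + 2 * t * slB α h N p q y z + t ^ 2 * slJ α h N p q z := by
  simp only [slJ, slB, glBackDiff_add_mul, Finset.mul_sum, ← Finset.sum_add_distrib]
  exact Finset.sum_congr rfl fun k _ => by ring

lemma slI_add_mul (N : ℕ) (r y z : ℕ → ℝ) (t : ℝ) :
    slI N r (fun j => y j + t * z j)
      = slI N r y + 2 * t * (∑ k ∈ Finset.Icc 1 N, r k * y k * z k) + t ^ 2 * slI N r z := by
  simp only [slI, Finset.mul_sum, ← Finset.sum_add_distrib]
  exact Finset.sum_congr rfl fun k _ => by ring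

lemma slJ_mul (α h : ℝ) (N : ℕ) (p q z : ℕ → ℝ) (t : ℝ) :
    slJ α h N p q (fun j => t * z j) = t ^ 2 * slJ α h N p q z := by
  have := slJ_add_mul α h N p q (fun _ => 0) z t
  simpa [slJ, slB, glBackDiff] using this

lemma slI_mul (N : ℕ) (r z : ℕ → ℝ) (t : ℝ) :
    slI N r (fun j => t * z j) = t ^ 2 * slI N r z := by
  have := slI_add_mul N r (fun _ => 0) z t
  simpa [slI] using this

lemma slI_nonneg {N : ℕ} {r : ℕ → ℝ} (hr : ∀ i ≤ N, 0 < r i) (y : ℕ → ℝ) : 0 ≤ slI N r y :=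
  Finset.sum_nonneg fun k hk => mul_nonneg (hr k (Finset.mem_Icc.1 hk).2).le (sq_nonneg _)

/-- The functional `J` attains its minimum on the admissible mesh functions. Only values on
`0, …, N` matter, so compactness is obtained in the product topology on `ℕ → ℝ` for the
functions vanishing beyond `N`. -/
lemma exists_minimizer (α h : ℝ) {N : ℕ} (p q : ℕ → ℝ) {r : ℕ → ℝ} (hr : ∀ i ≤ N, 0 < r i)
    {y₀ : ℕ → ℝ} (h0 : y₀ 0 = 0) (hN : y₀ N = 0) (hI : slI N r y₀ = 1) :
    ∃ z : ℕ → ℝ, z 0 = 0 ∧ z N = 0 ∧ slI N r z = 1 ∧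
      ∀ y : ℕ → ℝ, y 0 = 0 → y N = 0 → slI N r y = 1 → slJ α h N p q z ≤ slJ α h N p q y := by
  let K : Set (ℕ → ℝ) := {y | y 0 = 0 ∧ y N = 0 ∧ (∀ k, N < k → y k = 0) ∧ slI N r y = 1}
  have trunc_mem : ∀ y : ℕ → ℝ, y 0 = 0 → y N = 0 → slI N r y = 1 →
      (fun k => if k ≤ N then y k else 0) ∈ K := by
    intro y hy0 hyN hyI
    refine ⟨by simp [hy0], by simp [hyN], fun k hk => by simp [hk], ?_⟩
    rw [← hyI]
    exact slI_congr r fun j hj => by simp [hj]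
  have hclosed : IsClosed K := by
    have hout : IsClosed {y : ℕ → ℝ | ∀ k, N < k → y k = 0} := by
      have : {y : ℕ → ℝ | ∀ k, N < k → y k = 0} = ⋂ k, ⋂ (_ : N < k), {y | y k = 0} := by
        ext y
        simp
      rw [this]
      exact isClosed_iInter fun k => isClosed_iInter fun _ =>
        isClosed_eq (by fun_prop) (by fun_prop)
    exact (isClosed_eq (by fun_prop) (by fun_prop)).inter
      ((isClosed_eq (by fun_prop) (by fun_prop)).inter
        (hout.inter (isClosed_eq (by unfold slI; fun_prop) (by fun_prop))))
  have hcompact : IsCompact K := by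
    refine (isCompact_univ_pi fun k : ℕ =>
      (isCompact_Icc (a := -(1 + |1 / r k|)) (b := 1 + |1 / r k|))).of_isClosed_subset hclosed ?_
    rintro y ⟨hy0, hyN, hyout, hyI⟩ k -
    rw [Set.mem_Icc, ← abs_le]
    by_cases hk : 1 ≤ k ∧ k ≤ N
    · have hrk := hr k hk.2
      have hle : r k * y k ^ 2 ≤ 1 := by
        rw [← hyI]
        exact Finset.single_le_sum (f := fun k => r k * y k ^ 2)
          (fun i hi => mul_nonneg (hr i (Finset.mem_Icc.1 hi).2).le (sq_nonneg _))
          (Finset.mem_Icc.2 hk)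
      have hsq : y k ^ 2 ≤ 1 / r k := by
        rw [le_div_iff₀ hrk]
        linarith
      -- a number whose square is at most `s` is at most `1 + s` in absolute value
      have hs := hsq.trans (le_abs_self _)
      have := abs_nonneg (1 / r k)
      exact abs_le_of_sq_le_sq (by nlinarith) (by positivity)
    · have : y k = 0 := by
        rcases Nat.eq_zero_or_pos k with rfl | hpos
        · exact hy0
        · exact hyout k (by omega)
      rw [this, abs_zero]
      positivity
  have hcont : Continuous fun y : ℕ → ℝ => slJ α h N p q y := by
    unfold slJ glBackDiff
    fun_prop
  obtain ⟨z, ⟨hz0, hzN, -, hzI⟩, hmin⟩ :=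
    hcompact.exists_isMinOn ⟨_, trunc_mem y₀ h0 hN hI⟩ hcont.continuousOn
  refine ⟨z, hz0, hzN, hzI, fun y hy0 hyN hyI => ?_⟩
  refine (hmin (trunc_mem y hy0 hyN hyI)).trans (slJ_congr α h p q fun j hj => ?_).le
  simp [hj]

/-- A constrained minimizer `z` of `J` is an eigenfunction with eigenvalue `J[z]`. -/
lemma minimizer_isSLEigenpair {α h : ℝ} {N : ℕ} {p q r : ℕ → ℝ} (hr : ∀ i ≤ N, 0 < r i)
    {z : ℕ → ℝ} (h0 : z 0 = 0) (hN : z N = 0) (hI : slI N r z = 1)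
    (hmin : ∀ y : ℕ → ℝ, y 0 = 0 → y N = 0 → slI N r y = 1 →
      slJ α h N p q z ≤ slJ α h N p q y) :
    IsSLEigenpair α h N p q r (slJ α h N p q z) z := by
  set μ := slJ α h N p q z with hμ
  have hquad : ∀ y : ℕ → ℝ, y 0 = 0 → y N = 0 → μ * slI N r y ≤ slJ α h N p q y := by
    intro y hy0 hyN
    rcases (slI_nonneg hr y).eq_or_lt with hzero | hpos
    · have hy : ∀ j ≤ N, y j = (fun _ => (0 : ℝ)) j := by
        intro j hj
        rcases Nat.eq_zero_or_pos j with rfl | hjpos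
        · exact hy0
        · have := (Finset.sum_eq_zero_iff_of_nonneg (fun k hk =>
            mul_nonneg (hr k (Finset.mem_Icc.1 hk).2).le (sq_nonneg (y k)))).1 hzero.symm j
            (Finset.mem_Icc.2 ⟨hjpos, hj⟩)
          simpa [(hr j hj).ne'] using this
      rw [← hzero, slJ_congr α h p q hy]
      simp [slJ, glBackDiff]
    · have ht : ((Real.sqrt (slI N r y))⁻¹) ^ 2 = (slI N r y)⁻¹ := by
        rw [inv_pow, Real.sq_sqrt hpos.le]
      have := hmin (fun j => (Real.sqrt (slI N r y))⁻¹ * y j) (by simp [hy0]) (by simp [hyN])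
        (by rw [slI_mul, ht, inv_mul_cancel₀ hpos.ne'])
      rw [slJ_mul, ht, inv_mul_eq_div, le_div_iff₀ hpos] at this
      exact this
  have hvar : ∀ y : ℕ → ℝ, y 0 = 0 → y N = 0 →
      slB α h N p q z y = μ * ∑ k ∈ Finset.Icc 1 N, r k * z k * y k := by
    intro y hy0 hyN
    set S := ∑ k ∈ Finset.Icc 1 N, r k * z k * y k with hS
    -- `t ↦ (J - μ I)[z + t y]` is a nonnegative quadratic with zero constant term,
    -- so its discriminant forces the linear coefficient to vanish
    have hd := discrim_le_zero (a := slJ α h N p q y - μ * slI N r y)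
      (b := 2 * (slB α h N p q z y - μ * S)) (c := 0) fun t => by
        have := hquad (fun j => z j + t * y j) (by simp [h0, hy0]) (by simp [hN, hyN])
        rw [slJ_add_mul, slI_add_mul, hI, ← hμ, ← hS] at this
        linarith
    unfold discrim at hd
    have : (slB α h N p q z y - μ * S) ^ 2 = 0 := le_antisymm (by linarith) (sq_nonneg _)
    have := pow_eq_zero_iff (two_ne_zero) |>.1 this
    linarith
  refine ⟨h0, hN, ?_, fun k hk1 hkN => ?_⟩
  · by_contra! hcon
    have : slI N r z = 0 := Finset.sum_eq_zero fun k hk => by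
      simp [hcon k (Finset.mem_Icc.1 hk).2]
    linarith
  · have hk := hvar (Pi.single k 1) (Pi.single_eq_of_ne (by omega) _)
      (Pi.single_eq_of_ne (by omega) _)
    rw [slB_eq_sum α h N p q z _ (Pi.single_eq_of_ne (by omega) _)] at hk
    have hmem : 1 ≤ k ∧ k ≤ N := ⟨hk1, by omega⟩
    simp only [Pi.single_apply, ite_mul, mul_ite, one_mul, zero_mul, mul_one, mul_zero,
      Finset.sum_ite_eq', Finset.mem_Icc, hmem, and_self, if_true] at hk
    exact hk

/-- an eigenfunction `y¹` corresponding to the smallest eigenvalue `λ_1`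
of the discrete fractional Sturm–Liouville problem, normalized by `I[y¹] = 1`,
minimizes `J` over all mesh functions satisfying the boundary conditions and the
isoperimetric constraint `I[y] = 1`; moreover `J[y¹] = λ_1`. -/
theorem discrete_SL_first_eigenfunction_minimizes (a : ℝ) (α h : ℝ)
    (hα0 : 0 < α) (hα1 : α ≤ 1) (hh : 0 < h) (N : ℕ) (hN : 2 ≤ N) (p q r : ℕ → ℝ)
    (hp : ∀ i ≤ N, 0 < p i) (hr : ∀ i ≤ N, 0 < r i)
    (lam1 : ℝ) (y1 : ℕ → ℝ)
    (h1 : IsSLEigenpair α h N p q r lam1 y1)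
    (hsmallest : ∀ μ, (∃ y, IsSLEigenpair α h N p q r μ y) → lam1 ≤ μ)
    (hnorm : slI N r y1 = 1) :
    (∀ y : ℕ → ℝ, y 0 = 0 → y N = 0 → slI N r y = 1 →
      slJ α h N p q y1 ≤ slJ α h N p q y) ∧
    slJ α h N p q y1 = lam1 := by
  have hJ : slJ α h N p q y1 = lam1 := by
    rw [slJ_eq_of_isSLEigenpair h1, hnorm, mul_one]
  refine ⟨fun y hy0 hyN hyI => ?_, hJ⟩
  obtain ⟨z, hz0, hzN, hzI, hmin⟩ := exists_minimizer α h p q hr h1.1 h1.2.1 hnorm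
  rw [hJ]
  exact (hsmallest _ ⟨z, minimizer_isSLEigenpair hr hz0 hzN hzI hmin⟩).trans (hmin y hy0 hyN hyI)
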